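/- arXiv:2205.02342 — 2 statements merged into one kernel-verified Lean document; each statement's English description precedes it below -/
import Mathlib

section
/- For all 0 ≤ p ≤ 1, all positive semidefinite A, B in M_m(ℂ), all K in M_n(ℂ), and all Schwarz maps Φ : M_n(ℂ) → M_m(ℂ), it holds that tr[Φ(K)* A^p Φ(K) B^{1-p}] ≤ tr[K* Φ†(A)^p K Φ†(B)^{1-p}]. -/
open Matrix
open scoped ComplexOrder

/-- Real power of a matrix, defined spectrally for Hermitian matrices (junk value `0` otherwise). -/
noncomputable def mpow {k : ℕ} (A : Matrix (Fin k) (Fin k) ℂ) (p : ℝ) : Matrix (Fin k) (Fin k) ℂ :=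
  if hA : A.IsHermitian then
    (hA.eigenvectorUnitary : Matrix (Fin k) (Fin k) ℂ) *
      Matrix.diagonal (fun i => ((hA.eigenvalues i ^ p : ℝ) : ℂ)) *
      (hA.eigenvectorUnitary : Matrix (Fin k) (Fin k) ℂ)ᴴ
  else 0

/-- A Schwarz map: `Φ(K*K) ≥ Φ(K)*Φ(K)` for all `K`. -/
def IsSchwarz {a b : ℕ} (Φ : Matrix (Fin a) (Fin a) ℂ →ₗ[ℂ] Matrix (Fin b) (Fin b) ℂ) : Prop :=
  ∀ K, (Φ (Kᴴ * K) - (Φ K)ᴴ * Φ K).PosSemidef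

/-- A positive map: sends positive semidefinite matrices to positive semidefinite matrices. -/
def IsPositiveMap {a b : ℕ} (Φ : Matrix (Fin a) (Fin a) ℂ →ₗ[ℂ] Matrix (Fin b) (Fin b) ℂ) : Prop :=
  ∀ X, X.PosSemidef → (Φ X).PosSemidef

/-- `Ψ` is the Hilbert–Schmidt adjoint of `Φ`: `⟨X, Φ Y⟩ = ⟨Ψ X, Y⟩`. -/
def IsHSAdjoint {a b : ℕ} (Φ : Matrix (Fin a) (Fin a) ℂ →ₗ[ℂ] Matrix (Fin b) (Fin b) ℂ)
    (Ψ : Matrix (Fin b) (Fin b) ℂ →ₗ[ℂ] Matrix (Fin a) (Fin a) ℂ) : Prop :=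
  ∀ X Y, (Xᴴ * Φ Y).trace = ((Ψ X)ᴴ * Y).trace

/-! A Schwarz map `Φ` is positive and star-preserving, so pairing the Schwarz inequalities for `K`
and `K*` with `B` and `A` gives the two endpoints `p = 0` and `p = 1`, for every `K`.
In eigenbases, `tr[X* A^p X B^q] = ∑ α_i^p β_j^q |x_ij|²`, and the assertion becomes an
interpolation theorem for weighted `ℓ²` spaces: a map contracting the norms with weights `a` and `b`
contracts the norm with weight `a^p b^(1-p)`. This passes from the parallel sum
`a : b = a * b / (a + b)`, for which `(a : b) * |x|²` is the infimum of `a * |y|² + b * |z|²` over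
`x = y + z`, to the weighted geometric mean, since `a^p b^(1-p)` is a positive multiple of the
integral of `t^(p-2) * (a : t * b)` over `t > 0`. -/

open MeasureTheory Set

section ParallelSum

/-- The parallel sum `a : b = (a⁻¹ + b⁻¹)⁻¹` of two nonnegative weights, which is the weight of the
infimal convolution of `a * ‖·‖ ^ 2` and `b * ‖·‖ ^ 2`. It is written as a quotient so that it
also has the right value `0` when `a` or `b` vanishes. -/
noncomputable def parallelSum (a b : ℝ) : ℝ :=
  a * b / (a + b)

theorem parallelSum_mul_norm_add_sq_le {E : Type*} [SeminormedAddGroup E] {a b : ℝ}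
    (ha : 0 ≤ a) (hb : 0 ≤ b) (y z : E) :
    parallelSum a b * ‖y + z‖ ^ 2 ≤ a * ‖y‖ ^ 2 + b * ‖z‖ ^ 2 := by
  rcases (add_nonneg ha hb).eq_or_lt with h | h
  · rw [parallelSum, ← h, div_zero, zero_mul]
    positivity
  · calc parallelSum a b * ‖y + z‖ ^ 2
        ≤ parallelSum a b * (‖y‖ + ‖z‖) ^ 2 := by
          gcongr
          · exact div_nonneg (mul_nonneg ha hb) h.le
          · exact norm_add_le y z
      _ ≤ a * ‖y‖ ^ 2 + b * ‖z‖ ^ 2 := by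
          rw [parallelSum, div_mul_eq_mul_div, div_le_iff₀ h]
          nlinarith [sq_nonneg (a * ‖y‖ - b * ‖z‖)]

theorem exists_norm_sq_add_norm_sub_sq_eq_parallelSum {E : Type*} [SeminormedAddCommGroup E]
    [NormedSpace ℝ E] {a b : ℝ} (ha : 0 ≤ a) (hb : 0 ≤ b) (x : E) :
    ∃ y : E, a * ‖y‖ ^ 2 + b * ‖x - y‖ ^ 2 = parallelSum a b * ‖x‖ ^ 2 := by
  rcases (add_nonneg ha hb).eq_or_lt with h | h
  · obtain ⟨rfl, rfl⟩ := (add_eq_zero_iff_of_nonneg ha hb).mp h.symm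
    exact ⟨0, by simp [parallelSum]⟩
  · refine ⟨(b / (a + b)) • x, ?_⟩
    have hsub : x - (b / (a + b)) • x = (a / (a + b)) • x := by
      rw [show a / (a + b) = 1 - b / (a + b) by field_simp; ring, sub_smul, one_smul]
    rw [hsub, norm_smul, norm_smul, mul_pow, mul_pow, Real.norm_eq_abs, Real.norm_eq_abs, sq_abs,
      sq_abs, parallelSum]
    field_simp
    ring

theorem mul_rpowIntegrand₀₁_div_eqOn {p a b : ℝ} (hp : p ∈ Ioo 0 1) (ha : 0 ≤ a) (hb : 0 ≤ b) :
    EqOn (fun t => b * Real.rpowIntegrand₀₁ p t (a / b))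
      (fun t => t ^ (p - 2) * parallelSum a (t * b)) (Ioi 0) := by
  intro t (ht : 0 < t)
  rcases hb.eq_or_lt with rfl | hb
  · simp [parallelSum]
  · have hpow : t ^ (p - 1) = t ^ (p - 2) * t := by
      rw [← Real.rpow_add_one ht.ne']
      ring_nf
    simp only [parallelSum, Real.rpowIntegrand₀₁_eq_pow_div hp ht.le (div_nonneg ha hb.le), hpow]
    field_simp
    ring

theorem integrableOn_rpow_mul_parallelSum {p a b : ℝ} (hp : p ∈ Ioo 0 1) (ha : 0 ≤ a)
    (hb : 0 ≤ b) : IntegrableOn (fun t => t ^ (p - 2) * parallelSum a (t * b)) (Ioi 0) :=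
  IntegrableOn.congr_fun
    ((Real.integrableOn_rpowIntegrand₀₁_Ioi hp (div_nonneg ha hb)).const_mul b)
    (mul_rpowIntegrand₀₁_div_eqOn hp ha hb) measurableSet_Ioi

theorem rpow_mul_rpow_one_sub_eq_const_mul_integral {p a b : ℝ} (hp : p ∈ Ioo 0 1) (ha : 0 ≤ a)
    (hb : 0 ≤ b) :
    a ^ p * b ^ (1 - p) = (∫ t in Ioi 0, Real.rpowIntegrand₀₁ p t 1)⁻¹ *
      ∫ t in Ioi 0, t ^ (p - 2) * parallelSum a (t * b) := by
  rw [← setIntegral_congr_fun measurableSet_Ioi (mul_rpowIntegrand₀₁_div_eqOn hp ha hb),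
    integral_const_mul, mul_left_comm, ← Real.rpow_eq_const_mul_integral hp (div_nonneg ha hb)]
  rcases hb.eq_or_lt with rfl | hb
  · rw [Real.zero_rpow (sub_pos.mpr hp.2).ne', mul_zero, zero_mul]
  · rw [Real.div_rpow ha hb.le, Real.rpow_sub hb, Real.rpow_one]
    ring

end ParallelSum

section WeightedInterpolation

theorem sum_rpow_mul_rpow_mul_le_of_forall_parallelSum {ι κ : Type*} [Fintype ι] [Fintype κ]
    {a b x : ι → ℝ} {c d y : κ → ℝ} (ha : ∀ i, 0 ≤ a i) (hb : ∀ i, 0 ≤ b i) (hc : ∀ k, 0 ≤ c k)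
    (hd : ∀ k, 0 ≤ d k) {p : ℝ} (hp : p ∈ Ioo 0 1)
    (h : ∀ t > 0, ∑ k, parallelSum (c k) (t * d k) * y k ≤
      ∑ i, parallelSum (a i) (t * b i) * x i) :
    ∑ k, c k ^ p * d k ^ (1 - p) * y k ≤ ∑ i, a i ^ p * b i ^ (1 - p) * x i := by
  have hint_x (i : ι) := (integrableOn_rpow_mul_parallelSum hp (ha i) (hb i)).mul_const (x i)
  have hint_y (k : κ) := (integrableOn_rpow_mul_parallelSum hp (hc k) (hd k)).mul_const (y k)
  simp only [rpow_mul_rpow_one_sub_eq_const_mul_integral hp (ha _) (hb _),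
    rpow_mul_rpow_one_sub_eq_const_mul_integral hp (hc _) (hd _), mul_assoc _ (integral _ _),
    ← integral_mul_const, ← Finset.mul_sum]
  rw [← integral_finsetSum _ fun i _ => hint_x i, ← integral_finsetSum _ fun k _ => hint_y k]
  refine mul_le_mul_of_nonneg_left ?_
    (inv_nonneg.mpr (Real.integral_rpowIntegrand₀₁_one_pos hp).le)
  refine setIntegral_mono_on (integrable_finsetSum _ fun k _ => hint_y k)
    (integrable_finsetSum _ fun i _ => hint_x i) measurableSet_Ioi fun t (ht : 0 < t) => ?_
  simp only [mul_assoc (t ^ (p - 2)), ← Finset.mul_sum]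
  exact mul_le_mul_of_nonneg_left (h t ht) (Real.rpow_nonneg ht.le _)

variable {ι κ E F G : Type*} [Fintype ι] [Fintype κ] [SeminormedAddCommGroup E] [NormedSpace ℝ E]
  [SeminormedAddCommGroup F] [FunLike G (ι → E) (κ → F)] [AddMonoidHomClass G (ι → E) (κ → F)]
  (T : G) {a b : ι → ℝ} {c d : κ → ℝ}

theorem sum_parallelSum_mul_norm_sq_le (ha : ∀ i, 0 ≤ a i) (hb : ∀ i, 0 ≤ b i)
    (hc : ∀ k, 0 ≤ c k) (hd : ∀ k, 0 ≤ d k)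
    (hT₁ : ∀ x, ∑ k, c k * ‖T x k‖ ^ 2 ≤ ∑ i, a i * ‖x i‖ ^ 2)
    (hT₀ : ∀ x, ∑ k, d k * ‖T x k‖ ^ 2 ≤ ∑ i, b i * ‖x i‖ ^ 2) (x : ι → E) :
    ∑ k, parallelSum (c k) (d k) * ‖T x k‖ ^ 2 ≤ ∑ i, parallelSum (a i) (b i) * ‖x i‖ ^ 2 := by
  choose y hy using fun i => exists_norm_sq_add_norm_sub_sq_eq_parallelSum (ha i) (hb i) (x i)
  have hTx : T x = T y + T (x - y) := by rw [← map_add, add_sub_cancel]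
  calc ∑ k, parallelSum (c k) (d k) * ‖T x k‖ ^ 2
      ≤ ∑ k, (c k * ‖T y k‖ ^ 2 + d k * ‖T (x - y) k‖ ^ 2) := by
        rw [hTx]
        exact Finset.sum_le_sum fun k _ => parallelSum_mul_norm_add_sq_le (hc k) (hd k) _ _
    _ ≤ ∑ i, (a i * ‖y i‖ ^ 2 + b i * ‖(x - y) i‖ ^ 2) := by
        simp only [Finset.sum_add_distrib]
        exact add_le_add (hT₁ y) (hT₀ (x - y))
    _ = ∑ i, parallelSum (a i) (b i) * ‖x i‖ ^ 2 := Finset.sum_congr rfl fun i _ => hy i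

theorem sum_rpow_mul_rpow_mul_norm_sq_le (ha : ∀ i, 0 ≤ a i) (hb : ∀ i, 0 ≤ b i)
    (hc : ∀ k, 0 ≤ c k) (hd : ∀ k, 0 ≤ d k)
    (hT₁ : ∀ x, ∑ k, c k * ‖T x k‖ ^ 2 ≤ ∑ i, a i * ‖x i‖ ^ 2)
    (hT₀ : ∀ x, ∑ k, d k * ‖T x k‖ ^ 2 ≤ ∑ i, b i * ‖x i‖ ^ 2)
    {p : ℝ} (hp0 : 0 ≤ p) (hp1 : p ≤ 1) (x : ι → E) :
    ∑ k, c k ^ p * d k ^ (1 - p) * ‖T x k‖ ^ 2 ≤ ∑ i, a i ^ p * b i ^ (1 - p) * ‖x i‖ ^ 2 := by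
  rcases hp0.eq_or_lt with rfl | hp0
  · simpa using hT₀ x
  rcases hp1.eq_or_lt with rfl | hp1
  · simpa using hT₁ x
  refine sum_rpow_mul_rpow_mul_le_of_forall_parallelSum ha hb hc hd ⟨hp0, hp1⟩ fun t ht => ?_
  refine sum_parallelSum_mul_norm_sq_le T ha (fun i => mul_nonneg ht.le (hb i)) hc
    (fun k => mul_nonneg ht.le (hd k)) hT₁ (fun y => ?_) x
  simp only [mul_assoc, ← Finset.mul_sum]
  exact mul_le_mul_of_nonneg_left (hT₀ y) ht.le

end WeightedInterpolation

section TraceForm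

theorem mpow_zero {k : ℕ} {A : Matrix (Fin k) (Fin k) ℂ} (hA : A.IsHermitian) : mpow A 0 = 1 := by
  have hU : (hA.eigenvectorUnitary : Matrix (Fin k) (Fin k) ℂ) *
      (hA.eigenvectorUnitary : Matrix (Fin k) (Fin k) ℂ)ᴴ = 1 :=
    Unitary.coe_mul_star_self hA.eigenvectorUnitary
  simp [mpow, hA, hU]

theorem mpow_one {k : ℕ} {A : Matrix (Fin k) (Fin k) ℂ} (hA : A.IsHermitian) : mpow A 1 = A := by
  conv_rhs => rw [hA.spectral_theorem, Unitary.conjStarAlgAut_apply]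
  simp only [mpow, dif_pos hA, Real.rpow_one]
  rfl

/-- The matrix coefficients of `X` with respect to the eigenbases of `A` (on the left) and of `B`
(on the right). They diagonalize left multiplication by `A` and right multiplication by `B`
simultaneously. -/
noncomputable def eigenCoeff {ι κ : Type*} [Fintype ι] [DecidableEq ι] [Fintype κ] [DecidableEq κ]
    {A : Matrix ι ι ℂ} {B : Matrix κ κ ℂ} (hA : A.IsHermitian) (hB : B.IsHermitian) :
    Matrix ι κ ℂ ≃ₗ[ℂ] (ι × κ → ℂ) where
  toFun X ij := ((hA.eigenvectorUnitary.1)ᴴ * X * hB.eigenvectorUnitary.1) ij.1 ij.2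
  map_add' X Y := by ext; simp [Matrix.mul_add, Matrix.add_mul]
  map_smul' c X := by ext; simp
  invFun x := hA.eigenvectorUnitary.1 * Matrix.of (Function.curry x) * (hB.eigenvectorUnitary.1)ᴴ
  left_inv X := by
    have hU : hA.eigenvectorUnitary.1 * (hA.eigenvectorUnitary.1)ᴴ = 1 :=
      Unitary.coe_mul_star_self hA.eigenvectorUnitary
    have hV : hB.eigenvectorUnitary.1 * (hB.eigenvectorUnitary.1)ᴴ = 1 :=
      Unitary.coe_mul_star_self hB.eigenvectorUnitary
    change hA.eigenvectorUnitary.1 * ((hA.eigenvectorUnitary.1)ᴴ * X * hB.eigenvectorUnitary.1) *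
      (hB.eigenvectorUnitary.1)ᴴ = X
    rw [← Matrix.mul_assoc, ← Matrix.mul_assoc, hU, Matrix.one_mul, Matrix.mul_assoc, hV,
      Matrix.mul_one]
  right_inv x := by
    have hU : (hA.eigenvectorUnitary.1)ᴴ * hA.eigenvectorUnitary.1 = 1 :=
      Unitary.coe_star_mul_self hA.eigenvectorUnitary
    have hV : (hB.eigenvectorUnitary.1)ᴴ * hB.eigenvectorUnitary.1 = 1 :=
      Unitary.coe_star_mul_self hB.eigenvectorUnitary
    simp only [← Matrix.mul_assoc, hU, Matrix.one_mul]
    simp only [Matrix.mul_assoc, hV, Matrix.mul_one]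
    rfl

theorem re_trace_conjTranspose_mul_diagonal_mul_mul_diagonal {ι κ : Type*} [Fintype ι]
    [DecidableEq ι] [Fintype κ] [DecidableEq κ] (a : ι → ℝ) (b : κ → ℝ) (X : Matrix ι κ ℂ) :
    (Xᴴ * diagonal (fun i => (a i : ℂ)) * X * diagonal (fun j => (b j : ℂ))).trace.re =
      ∑ ij : ι × κ, a ij.1 * b ij.2 * ‖X ij.1 ij.2‖ ^ 2 := by
  rw [Fintype.sum_prod_type_right]
  simp only [Matrix.trace, Matrix.diag_apply, Matrix.mul_diagonal, Complex.re_sum]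
  refine Finset.sum_congr rfl fun j _ => ?_
  rw [Matrix.mul_apply, Finset.sum_mul, Complex.re_sum]
  refine Finset.sum_congr rfl fun i _ => ?_
  rw [Matrix.mul_diagonal, conjTranspose_apply, RCLike.star_def,
    ← Complex.ofReal_re (a i * b j * ‖X i j‖ ^ 2)]
  push_cast
  rw [← Complex.conj_mul']
  ring_nf

variable {k l : ℕ} {A : Matrix (Fin k) (Fin k) ℂ} {B : Matrix (Fin l) (Fin l) ℂ}

theorem re_trace_conjTranspose_mul_mpow_mul_mul_mpow (hA : A.IsHermitian) (hB : B.IsHermitian)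
    (p q : ℝ) (X : Matrix (Fin k) (Fin l) ℂ) :
    (Xᴴ * mpow A p * X * mpow B q).trace.re = ∑ ij : Fin k × Fin l,
      hA.eigenvalues ij.1 ^ p * hB.eigenvalues ij.2 ^ q * ‖eigenCoeff hA hB X ij‖ ^ 2 := by
  let U : Matrix (Fin k) (Fin k) ℂ := hA.eigenvectorUnitary
  let V : Matrix (Fin l) (Fin l) ℂ := hB.eigenvectorUnitary
  let a (i : Fin k) : ℝ := hA.eigenvalues i ^ p
  let b (j : Fin l) : ℝ := hB.eigenvalues j ^ q
  calc (Xᴴ * mpow A p * X * mpow B q).trace.re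
      = (Xᴴ * (U * diagonal (fun i => (a i : ℂ)) * Uᴴ) * X *
          (V * diagonal (fun j => (b j : ℂ)) * Vᴴ)).trace.re := by
        simp only [mpow, dif_pos hA, dif_pos hB, U, V, a, b]
    _ = ((Uᴴ * X * V)ᴴ * diagonal (fun i => (a i : ℂ)) * (Uᴴ * X * V) *
          diagonal (fun j => (b j : ℂ))).trace.re := by
        rw [← Matrix.mul_assoc, Matrix.trace_mul_comm]
        simp only [conjTranspose_mul, conjTranspose_conjTranspose, Matrix.mul_assoc]
    _ = ∑ ij : Fin k × Fin l, a ij.1 * b ij.2 * ‖eigenCoeff hA hB X ij‖ ^ 2 :=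
        re_trace_conjTranspose_mul_diagonal_mul_mul_diagonal a b (Uᴴ * X * V)

theorem re_trace_conjTranspose_mul_mul (hA : A.IsHermitian) (hB : B.IsHermitian)
    (X : Matrix (Fin k) (Fin l) ℂ) :
    (Xᴴ * A * X).trace.re =
      ∑ ij : Fin k × Fin l, hA.eigenvalues ij.1 * ‖eigenCoeff hA hB X ij‖ ^ 2 := by
  simpa [mpow_one hA, mpow_zero hB] using
    re_trace_conjTranspose_mul_mpow_mul_mul_mpow hA hB 1 0 X

theorem re_trace_conjTranspose_mul_self_mul (hA : A.IsHermitian) (hB : B.IsHermitian)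
    (X : Matrix (Fin k) (Fin l) ℂ) :
    (Xᴴ * X * B).trace.re =
      ∑ ij : Fin k × Fin l, hB.eigenvalues ij.2 * ‖eigenCoeff hA hB X ij‖ ^ 2 := by
  simpa [mpow_zero hA, mpow_one hB] using
    re_trace_conjTranspose_mul_mpow_mul_mul_mpow hA hB 0 1 X

theorem re_trace_mul_mpow_mul_mul_mpow_le {k' l' : ℕ} {A' : Matrix (Fin k') (Fin k') ℂ}
    {B' : Matrix (Fin l') (Fin l') ℂ} (hA : A.PosSemidef) (hB : B.PosSemidef)
    (hA' : A'.PosSemidef) (hB' : B'.PosSemidef)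
    (Φ : Matrix (Fin k) (Fin l) ℂ →ₗ[ℂ] Matrix (Fin k') (Fin l') ℂ)
    (hΦ₁ : ∀ X, ((Φ X)ᴴ * A' * Φ X).trace.re ≤ (Xᴴ * A * X).trace.re)
    (hΦ₀ : ∀ X, ((Φ X)ᴴ * Φ X * B').trace.re ≤ (Xᴴ * X * B).trace.re)
    {p : ℝ} (hp0 : 0 ≤ p) (hp1 : p ≤ 1) (X : Matrix (Fin k) (Fin l) ℂ) :
    ((Φ X)ᴴ * mpow A' p * Φ X * mpow B' (1 - p)).trace.re ≤
      (Xᴴ * mpow A p * X * mpow B (1 - p)).trace.re := by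
  obtain ⟨T, hT⟩ : ∃ T : (Fin k × Fin l → ℂ) →ₗ[ℂ] (Fin k' × Fin l' → ℂ),
      ∀ Y, T (eigenCoeff hA.1 hB.1 Y) = eigenCoeff hA'.1 hB'.1 (Φ Y) :=
    ⟨(eigenCoeff hA'.1 hB'.1).toLinearMap ∘ₗ Φ ∘ₗ (eigenCoeff hA.1 hB.1).symm.toLinearMap,
      fun Y => by simp⟩
  have hT₁ (x) : ∑ kl : Fin k' × Fin l', hA'.1.eigenvalues kl.1 * ‖T x kl‖ ^ 2 ≤
      ∑ ij : Fin k × Fin l, hA.1.eigenvalues ij.1 * ‖x ij‖ ^ 2 := by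
    obtain ⟨Y, rfl⟩ := (eigenCoeff hA.1 hB.1).surjective x
    simpa only [hT, ← re_trace_conjTranspose_mul_mul] using hΦ₁ Y
  have hT₀ (x) : ∑ kl : Fin k' × Fin l', hB'.1.eigenvalues kl.2 * ‖T x kl‖ ^ 2 ≤
      ∑ ij : Fin k × Fin l, hB.1.eigenvalues ij.2 * ‖x ij‖ ^ 2 := by
    obtain ⟨Y, rfl⟩ := (eigenCoeff hA.1 hB.1).surjective x
    simpa only [hT, ← re_trace_conjTranspose_mul_self_mul] using hΦ₀ Y
  rw [re_trace_conjTranspose_mul_mpow_mul_mul_mpow hA'.1 hB'.1,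
    re_trace_conjTranspose_mul_mpow_mul_mul_mpow hA.1 hB.1, ← hT]
  exact (sum_rpow_mul_rpow_mul_norm_sq_le T (fun ij => hA.eigenvalues_nonneg ij.1)
    (fun ij => hB.eigenvalues_nonneg ij.2) (fun kl => hA'.eigenvalues_nonneg kl.1)
    (fun kl => hB'.eigenvalues_nonneg kl.2) hT₁ hT₀ hp0 hp1 (eigenCoeff hA.1 hB.1 X) :)

end TraceForm

section PositiveMap

open scoped MatrixOrder in
theorem posSemidef_iff_forall_trace_mul_nonneg {ι : Type*} [Fintype ι] {A : Matrix ι ι ℂ} :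
    A.PosSemidef ↔ ∀ X : Matrix ι ι ℂ, X.PosSemidef → 0 ≤ (A * X).trace := by
  classical
  refine ⟨fun hA X hX => ?_, fun h => ?_⟩
  · obtain ⟨C, rfl⟩ := CStarAlgebra.nonneg_iff_eq_star_mul_self.mp hX.nonneg
    rw [← Matrix.mul_assoc, Matrix.trace_mul_comm, ← Matrix.mul_assoc]
    exact (hA.mul_mul_conjTranspose_same C).trace_nonneg
  · rw [← isPositive_toEuclideanLin_iff, LinearMap.isPositive_iff_complex]
    intro x
    have hx : 0 ≤ star x.ofLp ⬝ᵥ (A *ᵥ x.ofLp) := by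
      simpa only [mul_vecMulVec, trace_vecMulVec, dotProduct_comm] using
        h _ (posSemidef_vecMulVec_self_star x.ofLp)
    have hinner : inner ℂ (A.toEuclideanLin x) x = star (star x.ofLp ⬝ᵥ (A *ᵥ x.ofLp)) := by
      rw [EuclideanSpace.inner_eq_star_dotProduct, ofLp_toLpLin, toLin'_apply, star_dotProduct,
        star_star, dotProduct_comm]
    obtain ⟨hre, him⟩ := RCLike.nonneg_iff.mp (hinner ▸ star_nonneg_iff.mpr hx)
    exact ⟨RCLike.ext (by simp) (by simp [him]), hre⟩

variable {a b : ℕ} {Φ : Matrix (Fin a) (Fin a) ℂ →ₗ[ℂ] Matrix (Fin b) (Fin b) ℂ}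
  {Ψ : Matrix (Fin b) (Fin b) ℂ →ₗ[ℂ] Matrix (Fin a) (Fin a) ℂ}

open scoped MatrixOrder Matrix.Norms.L2Operator in
theorem IsPositiveMap.map_conjTranspose (hΦ : IsPositiveMap Φ) (X : Matrix (Fin a) (Fin a) ℂ) :
    Φ Xᴴ = (Φ X)ᴴ := by
  obtain ⟨Y, hY, -, rfl⟩ := CStarAlgebra.exists_sum_four_nonneg X
  have hY_herm (i) : (Y i)ᴴ = Y i := (nonneg_iff_posSemidef.mp (hY i)).1
  have hΦY_herm (i) : (Φ (Y i))ᴴ = Φ (Y i) := (hΦ _ (nonneg_iff_posSemidef.mp (hY i))).1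
  simp only [conjTranspose_sum, conjTranspose_smul, map_sum, map_smul, hY_herm, hΦY_herm]

theorem IsHSAdjoint.isPositiveMap (hadj : IsHSAdjoint Φ Ψ) (hΦ : IsPositiveMap Φ) :
    IsPositiveMap Ψ := by
  intro A hA
  rw [← posSemidef_conjTranspose_iff, posSemidef_iff_forall_trace_mul_nonneg]
  intro X hX
  rw [← hadj A X, hA.1.eq]
  exact posSemidef_iff_forall_trace_mul_nonneg.mp hA _ (hΦ X hX)

open scoped MatrixOrder in
theorem IsSchwarz.isPositiveMap (hΦ : IsSchwarz Φ) : IsPositiveMap Φ := by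
  intro X hX
  obtain ⟨K, rfl⟩ := CStarAlgebra.nonneg_iff_eq_star_mul_self.mp hX.nonneg
  simpa [star_eq_conjTranspose] using (hΦ K).add (posSemidef_conjTranspose_mul_self (Φ K))

theorem IsSchwarz.re_trace_conjTranspose_mul_self_mul_le (hΦ : IsSchwarz Φ)
    (hadj : IsHSAdjoint Φ Ψ) {B : Matrix (Fin b) (Fin b) ℂ} (hB : B.PosSemidef)
    (X : Matrix (Fin a) (Fin a) ℂ) :
    ((Φ X)ᴴ * Φ X * B).trace.re ≤ (Xᴴ * X * Ψ B).trace.re := by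
  have hΨB : (Ψ B).PosSemidef := hadj.isPositiveMap hΦ.isPositiveMap B hB
  have hpair : (B * Φ (Xᴴ * X)).trace = (Ψ B * (Xᴴ * X)).trace := by
    simpa only [hB.1.eq, hΨB.1.eq] using hadj B (Xᴴ * X)
  have hnonneg := posSemidef_iff_forall_trace_mul_nonneg.mp hB _ (hΦ X)
  rw [Matrix.mul_sub, trace_sub, sub_nonneg, hpair, trace_mul_comm B, trace_mul_comm (Ψ B)]
    at hnonneg
  exact (Complex.le_def.mp hnonneg).1

theorem IsSchwarz.re_trace_conjTranspose_mul_mul_le (hΦ : IsSchwarz Φ) (hadj : IsHSAdjoint Φ Ψ)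
    {A : Matrix (Fin b) (Fin b) ℂ} (hA : A.PosSemidef) (X : Matrix (Fin a) (Fin a) ℂ) :
    ((Φ X)ᴴ * A * Φ X).trace.re ≤ (Xᴴ * Ψ A * X).trace.re := by
  have h := hΦ.re_trace_conjTranspose_mul_self_mul_le hadj hA Xᴴ
  rwa [hΦ.isPositiveMap.map_conjTranspose, conjTranspose_conjTranspose,
    conjTranspose_conjTranspose, ← trace_mul_cycle, ← trace_mul_cycle Xᴴ] at h

end PositiveMap

theorem stmt0 {n m : ℕ} (p : ℝ) (hp0 : 0 ≤ p) (hp1 : p ≤ 1)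
    (A B : Matrix (Fin m) (Fin m) ℂ) (hA : A.PosSemidef) (hB : B.PosSemidef)
    (K : Matrix (Fin n) (Fin n) ℂ)
    (Φ : Matrix (Fin n) (Fin n) ℂ →ₗ[ℂ] Matrix (Fin m) (Fin m) ℂ)
    (Ψ : Matrix (Fin m) (Fin m) ℂ →ₗ[ℂ] Matrix (Fin n) (Fin n) ℂ)
    (hΦ : IsSchwarz Φ) (hadj : IsHSAdjoint Φ Ψ) :
    ((Φ K)ᴴ * mpow A p * Φ K * mpow B (1 - p)).trace.re ≤
      (Kᴴ * mpow (Ψ A) p * K * mpow (Ψ B) (1 - p)).trace.re := by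
  have hΨ : IsPositiveMap Ψ := hadj.isPositiveMap hΦ.isPositiveMap
  exact re_trace_mul_mpow_mul_mul_mpow_le (hΨ A hA) (hΨ B hB) hA hB Φ
    (hΦ.re_trace_conjTranspose_mul_mul_le hadj hA)
    (hΦ.re_trace_conjTranspose_mul_self_mul_le hadj hB) hp0 hp1 K
end

section
/- For any B ∈ M_n(ℂ) and all 0 < p ≤ 1, the map A ↦ tr[(B* A^p B)^{1/p}] is concave on the positive semidefinite matrices M_n^+(ℂ). -/
open Matrix
open scoped ComplexOrder

/-! By Young's inequality applied to pairs of eigenvalues (an argument of Carlen and Lieb),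
`p * tr (B* A^p B)^(1/p)` is the maximum over `X ≥ 0` of `tr (B* A^p B X^(1-p)) - (1 - p) * tr X`,
attained at `X = (B* A^p B)^(1/p)`. A partial supremum of a jointly concave function is concave, so
it is enough to know Lieb's theorem that
`(A, X) ↦ tr (K* A^p K X^(1-p))` is jointly concave. For this, `a^p x^(1-p)` is written as an
integral over `t > 0`, with positive weights, of the parallel sums of `a` and `t x`. The quadratic
form at `K` of the parallel sum of two commuting positive operators is the infimum over
decompositions `K = W + (K - W)` of a sum of the two quadratic forms; each of those sums is linear
in `(A, X)`, and an infimum of linear functions is concave.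
-/

section Concavity

variable {E F : Type*} [AddCommGroup E] [Module ℝ E] [AddCommGroup F] [Module ℝ F]
  {s : Set E} {t : Set F}

lemma concaveOn_of_isLeast_range {ι : Type*} {f : ι → E → ℝ} {g : E → ℝ} (hs : Convex ℝ s)
    (hf : ∀ i, ConcaveOn ℝ s (f i)) (hg : ∀ x ∈ s, IsLeast (Set.range fun i => f i x) (g x)) :
    ConcaveOn ℝ s g := by
  refine ⟨hs, fun x hx y hy a b ha hb hab => ?_⟩
  obtain ⟨i, hi⟩ := (hg _ (hs hx hy ha hb hab)).1
  calc a • g x + b • g y ≤ a • f i x + b • f i y := by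
        gcongr
        exacts [(hg x hx).2 ⟨i, rfl⟩, (hg y hy).2 ⟨i, rfl⟩]
    _ ≤ f i (a • x + b • y) := (hf i).2 hx hy ha hb hab
    _ = g (a • x + b • y) := hi

lemma concaveOn_of_isGreatest_image {f : E → F → ℝ} {g : E → ℝ} (hs : Convex ℝ s)
    (hf : ConcaveOn ℝ (s ×ˢ t) fun z => f z.1 z.2)
    (hg : ∀ x ∈ s, IsGreatest (f x '' t) (g x)) :
    ConcaveOn ℝ s g := by
  refine ⟨hs, fun x₁ hx₁ x₂ hx₂ a b ha hb hab => ?_⟩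
  obtain ⟨y₁, hy₁, hg₁⟩ := (hg x₁ hx₁).1
  obtain ⟨y₂, hy₂, hg₂⟩ := (hg x₂ hx₂).1
  have hmem : (a • x₁ + b • x₂, a • y₁ + b • y₂) ∈ s ×ˢ t :=
    hf.1 (Set.mk_mem_prod hx₁ hy₁) (Set.mk_mem_prod hx₂ hy₂) ha hb hab
  calc a • g x₁ + b • g x₂ = a • f x₁ y₁ + b • f x₂ y₂ := by rw [← hg₁, ← hg₂]
    _ ≤ f (a • x₁ + b • x₂) (a • y₁ + b • y₂) :=
        hf.2 (Set.mk_mem_prod hx₁ hy₁) (Set.mk_mem_prod hx₂ hy₂) ha hb hab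
    _ ≤ g (a • x₁ + b • x₂) := (hg _ hmem.1).2 ⟨_, hmem.2, rfl⟩

end Concavity

section Scalar

lemma isLeast_range_norm_sq_add_norm_sub_sq {E : Type*} [NormedAddCommGroup E]
    [InnerProductSpace ℝ E] {a y : ℝ} (ha : 0 ≤ a) (hy : 0 ≤ y) (b : E) :
    IsLeast (Set.range fun w => a * ‖w‖ ^ 2 + y * ‖b - w‖ ^ 2) (a * y / (a + y) * ‖b‖ ^ 2) := by
  have complete_square (w : E) : (a + y) * (a * ‖w‖ ^ 2 + y * ‖b - w‖ ^ 2) =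
      a * y * ‖b‖ ^ 2 + ‖(a + y) • w - y • b‖ ^ 2 := by
    simp only [norm_sub_sq_real, norm_smul, inner_smul_left, inner_smul_right, mul_pow,
      Real.norm_eq_abs, sq_abs, real_inner_comm w b, conj_trivial]
    ring
  rcases (add_nonneg ha hy).eq_or_lt with h0 | hpos
  · obtain ⟨rfl, rfl⟩ : a = 0 ∧ y = 0 := (add_eq_zero_iff_of_nonneg ha hy).1 h0.symm
    simp
  refine ⟨⟨(y / (a + y)) • b, ?_⟩, ?_⟩
  · have hw : (a + y) • (y / (a + y)) • b - y • b = 0 := by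
      rw [smul_smul, mul_div_cancel₀ _ hpos.ne', sub_self]
    have h := complete_square ((y / (a + y)) • b)
    rw [hw, norm_zero, zero_pow two_ne_zero, add_zero] at h
    rw [div_mul_eq_mul_div, eq_div_iff hpos.ne', mul_comm, h]
  · rintro _ ⟨w, rfl⟩
    rw [div_mul_eq_mul_div, div_le_iff₀' hpos, complete_square]
    exact le_add_of_nonneg_right (sq_nonneg _)

lemma rpowIntegrand₀₁_div_mul {p t a x : ℝ} (ht : 0 < t) (ha : 0 ≤ a) (hx : 0 ≤ x) :
    Real.rpowIntegrand₀₁ p t (a / x) * x = t ^ (p - 2) * (a * (t * x) / (a + t * x)) := by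
  rcases hx.eq_or_lt with rfl | hx
  · simp
  have hsum : t + a / x = (a + t * x) / x := by field_simp; ring
  rw [Real.rpowIntegrand₀₁, hsum, Real.rpow_sub ht, Real.rpow_two]
  field_simp
  ring

lemma div_rpow_mul_self {p a x : ℝ} (hp : p < 1) (ha : 0 ≤ a) (hx : 0 ≤ x) :
    (a / x) ^ p * x = a ^ p * x ^ (1 - p) := by
  rcases hx.eq_or_lt with rfl | hx
  · simp [Real.zero_rpow (sub_pos.2 hp).ne']
  · rw [Real.div_rpow ha hx.le, Real.rpow_sub hx, Real.rpow_one]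
    ring

open MeasureTheory in
lemma exists_measure_rpow_mul_rpow_eq_integral {p : ℝ} (hp : p ∈ Set.Ioo 0 1) :
    ∃ μ : Measure ℝ, ∀ a x : ℝ, 0 ≤ a → 0 ≤ x →
      IntegrableOn (fun t => t ^ (p - 2) * (a * (t * x) / (a + t * x))) (Set.Ioi 0) μ ∧
      a ^ p * x ^ (1 - p) =
        ∫ t in Set.Ioi 0, t ^ (p - 2) * (a * (t * x) / (a + t * x)) ∂μ := by
  obtain ⟨μ, hμ⟩ := Real.exists_measure_rpow_eq_integral_rpowIntegrand₀₁ hp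
  refine ⟨μ, fun a x ha hx => ?_⟩
  obtain ⟨hint, heq⟩ := hμ (a / x) (div_nonneg ha hx)
  have hcongr : Set.EqOn (fun t => Real.rpowIntegrand₀₁ p t (a / x) * x)
      (fun t => t ^ (p - 2) * (a * (t * x) / (a + t * x))) (Set.Ioi 0) :=
    fun t ht => rpowIntegrand₀₁_div_mul ht ha hx
  refine ⟨IntegrableOn.congr_fun (hint.mul_const x) hcongr measurableSet_Ioi, ?_⟩
  rw [← div_rpow_mul_self hp.2 ha hx, heq, ← integral_mul_const,
    setIntegral_congr_fun measurableSet_Ioi hcongr]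

end Scalar

section FunctionalCalculus

variable {𝕜 ι : Type*} [RCLike 𝕜] [Fintype ι] [DecidableEq ι] {A : Matrix ι ι 𝕜}

lemma nonneg_of_mem_real_spectrum (hA : A.PosSemidef) {x : ℝ} (hx : x ∈ spectrum ℝ A) :
    0 ≤ x := by
  obtain ⟨i, rfl⟩ := hA.isHermitian.spectrum_real_eq_range_eigenvalues ▸ hx
  exact hA.eigenvalues_nonneg i

lemma cfc_eq_eigenvectorUnitary_mul_diagonal (hA : A.IsHermitian) (f : ℝ → ℝ) :
    cfc f A = (hA.eigenvectorUnitary : Matrix ι ι 𝕜) *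
      diagonal (fun i => (f (hA.eigenvalues i) : 𝕜)) *
      (hA.eigenvectorUnitary : Matrix ι ι 𝕜)ᴴ := by
  rw [hA.cfc_eq]
  rfl

lemma posSemidef_cfc {f : ℝ → ℝ} (hA : A.PosSemidef) (hf : ∀ x, 0 ≤ x → 0 ≤ f x) :
    (cfc f A).PosSemidef := by
  rw [cfc_eq_eigenvectorUnitary_mul_diagonal hA.isHermitian]
  refine (PosSemidef.diagonal fun i => ?_).mul_mul_conjTranspose_same _
  exact RCLike.ofReal_nonneg.2 (hf _ (hA.eigenvalues_nonneg i))

lemma mul_cfc_rpow_cfc_rpow {p : ℝ} (hp : 0 < p) (hA : A.PosSemidef) :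
    A * cfc (fun x : ℝ => x ^ (1 - p)) (cfc (fun x : ℝ => x ^ (1 / p)) A) =
      cfc (fun x : ℝ => x ^ (1 / p)) A := by
  have hsa : IsSelfAdjoint A := hA.isHermitian
  rw [← cfc_comp' _ _ A ((A.finite_real_spectrum.image _).continuousOn _)
    (A.finite_real_spectrum.continuousOn _)]
  conv_lhs => enter [1]; rw [← cfc_id' ℝ A]
  rw [← cfc_mul _ _ A (A.finite_real_spectrum.continuousOn _)
    (A.finite_real_spectrum.continuousOn _)]
  refine cfc_congr fun x hx => ?_
  rcases (nonneg_of_mem_real_spectrum hA hx).eq_or_lt with rfl | hx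
  · simp [Real.zero_rpow (inv_pos.2 hp).ne']
  · calc x * (x ^ (1 / p)) ^ (1 - p) = x ^ (1 + 1 / p * (1 - p)) := by
          rw [Real.rpow_add hx, Real.rpow_one, Real.rpow_mul hx.le]
      _ = x ^ (1 / p) := by congr 1; field_simp; ring

lemma mpow_eq_cfc {k : ℕ} (A : Matrix (Fin k) (Fin k) ℂ) (p : ℝ) :
    mpow A p = cfc (fun x : ℝ => x ^ p) A := by
  unfold mpow
  split_ifs with hA
  · rw [cfc_eq_eigenvectorUnitary_mul_diagonal hA]
    rfl
  · exact (cfc_apply_of_not_predicate A hA).symm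

end FunctionalCalculus

section PsdCone

/-- The cone of positive semidefinite matrices, the domain of the concavity statements. -/
def psdCone (𝕜 ι : Type*) [RCLike 𝕜] : Set (Matrix ι ι 𝕜) :=
  {A | A.PosSemidef}

lemma convex_psdCone (𝕜 ι : Type*) [RCLike 𝕜] : Convex ℝ (psdCone 𝕜 ι) :=
  fun _ hA _ hB _ _ ha hb _ => (hA.smul ha).add (hB.smul hb)

lemma convex_psdCone_prod (𝕜 ι κ : Type*) [RCLike 𝕜] :
    Convex ℝ (psdCone 𝕜 ι ×ˢ psdCone 𝕜 κ) :=
  (convex_psdCone 𝕜 ι).prod (convex_psdCone 𝕜 κ)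

lemma concaveOn_re_trace_comp {𝕜 ι E : Type*} [RCLike 𝕜] [Fintype ι] [AddCommGroup E]
    [Module ℝ E] {s : Set E} (hs : Convex ℝ s) (L : E →ₗ[ℝ] Matrix ι ι 𝕜) :
    ConcaveOn ℝ s fun z => RCLike.re (L z).trace :=
  (RCLike.reLm ∘ₗ traceLinearMap ι ℝ 𝕜 ∘ₗ L).concaveOn hs

end PsdCone

section SpectralForm

variable {𝕜 ι κ : Type*} [RCLike 𝕜] [Fintype ι] [DecidableEq ι] [Fintype κ] [DecidableEq κ]

/-- The quadratic form `K ↦ ⟪K, φ(L_A, R_X) K⟫` for the Hilbert–Schmidt inner product, where `φ` is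
applied to the commuting operators `L_A` of left multiplication by `A` and `R_X` of right
multiplication by `X`. Its value is `0` unless `A` and `X` are both Hermitian. -/
noncomputable def spectralForm (φ : ℝ → ℝ → ℝ) (K : Matrix ι κ 𝕜)
    (Z : Matrix ι ι 𝕜 × Matrix κ κ 𝕜) : ℝ :=
  if h : Z.1.IsHermitian ∧ Z.2.IsHermitian then
    ∑ i, ∑ j, φ (h.1.eigenvalues i) (h.2.eigenvalues j) *
      ‖((h.1.eigenvectorUnitary : Matrix ι ι 𝕜)ᴴ * K *
        (h.2.eigenvectorUnitary : Matrix κ κ 𝕜)) i j‖ ^ 2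
  else 0

variable {φ ψ : ℝ → ℝ → ℝ} {K : Matrix ι κ 𝕜} {A : Matrix ι ι 𝕜} {X : Matrix κ κ 𝕜}

lemma spectralForm_of_isHermitian (hA : A.IsHermitian) (hX : X.IsHermitian) :
    spectralForm φ K (A, X) = ∑ i, ∑ j, φ (hA.eigenvalues i) (hX.eigenvalues j) *
      ‖((hA.eigenvectorUnitary : Matrix ι ι 𝕜)ᴴ * K *
        (hX.eigenvectorUnitary : Matrix κ κ 𝕜)) i j‖ ^ 2 :=
  dif_pos ⟨hA, hX⟩

lemma spectralForm_mono (hA : A.PosSemidef) (hX : X.PosSemidef)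
    (h : ∀ a x, 0 ≤ a → 0 ≤ x → φ a x ≤ ψ a x) :
    spectralForm φ K (A, X) ≤ spectralForm ψ K (A, X) := by
  simp only [spectralForm_of_isHermitian hA.isHermitian hX.isHermitian]
  gcongr with i _ j _
  exact h _ _ (hA.eigenvalues_nonneg i) (hX.eigenvalues_nonneg j)

lemma spectralForm_congr (hA : A.PosSemidef) (hX : X.PosSemidef)
    (h : ∀ a x, 0 ≤ a → 0 ≤ x → φ a x = ψ a x) :
    spectralForm φ K (A, X) = spectralForm ψ K (A, X) :=
  (spectralForm_mono hA hX fun a x ha hx => (h a x ha hx).le).antisymm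
    (spectralForm_mono hA hX fun a x ha hx => (h a x ha hx).ge)

lemma spectralForm_add (φ ψ : ℝ → ℝ → ℝ) (K : Matrix ι κ 𝕜) (Z : Matrix ι ι 𝕜 × Matrix κ κ 𝕜) :
    spectralForm (fun a x => φ a x + ψ a x) K Z = spectralForm φ K Z + spectralForm ψ K Z := by
  unfold spectralForm
  split_ifs
  · simp only [add_mul, Finset.sum_add_distrib]
  · rw [add_zero]

lemma spectralForm_const_mul (c : ℝ) (φ : ℝ → ℝ → ℝ) (K : Matrix ι κ 𝕜)
    (Z : Matrix ι ι 𝕜 × Matrix κ κ 𝕜) :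
    spectralForm (fun a x => c * φ a x) K Z = c * spectralForm φ K Z := by
  unfold spectralForm
  split_ifs
  · simp only [mul_assoc, Finset.mul_sum]
  · rw [mul_zero]

open MeasureTheory in
lemma integrable_spectralForm {α : Type*} [MeasurableSpace α] {μ : Measure α}
    {φ : α → ℝ → ℝ → ℝ} (hA : A.PosSemidef) (hX : X.PosSemidef)
    (hφ : ∀ a x, 0 ≤ a → 0 ≤ x → Integrable (fun t => φ t a x) μ) :
    Integrable (fun t => spectralForm (φ t) K (A, X)) μ := by
  simp only [spectralForm_of_isHermitian hA.isHermitian hX.isHermitian]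
  exact integrable_finsetSum _ fun i _ => integrable_finsetSum _ fun j _ =>
    (hφ _ _ (hA.eigenvalues_nonneg i) (hX.eigenvalues_nonneg j)).mul_const _

open MeasureTheory in
lemma spectralForm_integral {α : Type*} [MeasurableSpace α] {μ : Measure α}
    {φ : α → ℝ → ℝ → ℝ} (hA : A.PosSemidef) (hX : X.PosSemidef)
    (hφ : ∀ a x, 0 ≤ a → 0 ≤ x → Integrable (fun t => φ t a x) μ) :
    spectralForm (fun a x => ∫ t, φ t a x ∂μ) K (A, X) =
      ∫ t, spectralForm (φ t) K (A, X) ∂μ := by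
  have hint (i : ι) (j : κ) :=
    (hφ _ _ (hA.eigenvalues_nonneg i) (hX.eigenvalues_nonneg j)).mul_const
    (‖((hA.isHermitian.eigenvectorUnitary : Matrix ι ι 𝕜)ᴴ * K *
      (hX.isHermitian.eigenvectorUnitary : Matrix κ κ 𝕜)) i j‖ ^ 2)
  simp only [spectralForm_of_isHermitian hA.isHermitian hX.isHermitian]
  rw [integral_finsetSum _ fun i _ => integrable_finsetSum _ fun j _ => hint i j]
  refine Finset.sum_congr rfl fun i _ => ?_
  rw [integral_finsetSum _ fun j _ => hint i j]
  simp only [integral_mul_const]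

lemma re_trace_conjTranspose_mul_diagonal_mul_diagonal (M : Matrix ι κ 𝕜) (f : ι → ℝ)
    (g : κ → ℝ) :
    RCLike.re (Mᴴ * diagonal (fun i => (f i : 𝕜)) * M * diagonal (fun j => (g j : 𝕜))).trace =
      ∑ i, ∑ j, f i * g j * ‖M i j‖ ^ 2 := by
  have entry (i : ι) (j : κ) :
      star (M i j) * (f i : 𝕜) * M i j * (g j : 𝕜) = ((f i * g j * ‖M i j‖ ^ 2 : ℝ) : 𝕜) := by
    push_cast
    rw [← RCLike.conj_mul, RCLike.star_def]
    ring
  simp only [trace, diag_apply, mul_diagonal, Matrix.mul_apply (N := M), conjTranspose_apply,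
    Finset.sum_mul, entry, map_sum, RCLike.ofReal_re]
  exact Finset.sum_comm

lemma spectralForm_mul (hA : A.IsHermitian) (hX : X.IsHermitian) (f g : ℝ → ℝ)
    (K : Matrix ι κ 𝕜) :
    spectralForm (fun a x => f a * g x) K (A, X) =
      RCLike.re (Kᴴ * cfc f A * K * cfc g X).trace := by
  rw [spectralForm_of_isHermitian hA hX, ← re_trace_conjTranspose_mul_diagonal_mul_diagonal,
    cfc_eq_eigenvectorUnitary_mul_diagonal hA, cfc_eq_eigenvectorUnitary_mul_diagonal hX,
    ← Matrix.mul_assoc _ _ (_ᴴ), trace_mul_comm _ (_ᴴ)]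
  simp only [conjTranspose_mul, conjTranspose_conjTranspose, Matrix.mul_assoc]

lemma spectralForm_left (hA : A.IsHermitian) (hX : X.IsHermitian) (f : ℝ → ℝ)
    (K : Matrix ι κ 𝕜) :
    spectralForm (fun a _ => f a) K (A, X) = RCLike.re (Kᴴ * cfc f A * K).trace := by
  simpa only [mul_one, Matrix.mul_one, cfc_const_one ℝ X (ha := hX.isSelfAdjoint)] using
    spectralForm_mul hA hX f (fun _ => 1) K

lemma spectralForm_right (hA : A.IsHermitian) (hX : X.IsHermitian) (g : ℝ → ℝ)
    (K : Matrix ι κ 𝕜) :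
    spectralForm (fun _ x => g x) K (A, X) = RCLike.re (Kᴴ * K * cfc g X).trace := by
  simpa only [one_mul, Matrix.mul_one, cfc_const_one ℝ A (ha := hA.isSelfAdjoint)] using
    spectralForm_mul hA hX (fun _ => 1) g K

lemma isLeast_range_spectralForm_add_spectralForm_sub (hA : A.PosSemidef) (hX : X.PosSemidef)
    (hφ : ∀ a x, 0 ≤ a → 0 ≤ x → 0 ≤ φ a x) (hψ : ∀ a x, 0 ≤ a → 0 ≤ x → 0 ≤ ψ a x)
    (K : Matrix ι κ 𝕜) :
    IsLeast (Set.range fun W => spectralForm φ W (A, X) + spectralForm ψ (K - W) (A, X))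
      (spectralForm (fun a x => φ a x * ψ a x / (φ a x + ψ a x)) K (A, X)) := by
  set U : Matrix ι ι 𝕜 := ↑hA.isHermitian.eigenvectorUnitary
  set V : Matrix κ κ 𝕜 := ↑hX.isHermitian.eigenvectorUnitary
  have entry_isLeast (i : ι) (j : κ) := isLeast_range_norm_sq_add_norm_sub_sq
    (hφ _ _ (hA.eigenvalues_nonneg i) (hX.eigenvalues_nonneg j))
    (hψ _ _ (hA.eigenvalues_nonneg i) (hX.eigenvalues_nonneg j)) ((Uᴴ * K * V) i j)
  simp only [spectralForm_of_isHermitian hA.isHermitian hX.isHermitian, ← Finset.sum_add_distrib,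
    Matrix.mul_sub, Matrix.sub_mul, Matrix.sub_apply]
  constructor
  · choose w hw using fun i j => (entry_isLeast i j).1
    have hUV : Uᴴ * (U * of w * Vᴴ) * V = of w := by
      have hU : Uᴴ * U = 1 := Unitary.coe_star_mul_self hA.isHermitian.eigenvectorUnitary
      have hV : Vᴴ * V = 1 := Unitary.coe_star_mul_self hX.isHermitian.eigenvectorUnitary
      rw [Matrix.mul_assoc U, ← Matrix.mul_assoc, hU, Matrix.one_mul, Matrix.mul_assoc, hV,
        Matrix.mul_one]
    refine ⟨U * of w * Vᴴ, Finset.sum_congr rfl fun i _ => Finset.sum_congr rfl fun j _ => ?_⟩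
    rw [hUV]
    exact hw i j
  · rintro _ ⟨W, rfl⟩
    exact Finset.sum_le_sum fun i _ => Finset.sum_le_sum fun j _ =>
      (entry_isLeast i j).2 ⟨(Uᴴ * W * V) i j, rfl⟩

end SpectralForm

section Lieb

variable {𝕜 ι κ : Type*} [RCLike 𝕜] [Fintype ι] [DecidableEq ι] [Fintype κ] [DecidableEq κ]

lemma concaveOn_spectralForm_fst (K : Matrix ι κ 𝕜) :
    ConcaveOn ℝ (psdCone 𝕜 ι ×ˢ psdCone 𝕜 κ) (spectralForm (fun a _ => a) K) := by
  refine (concaveOn_re_trace_comp (convex_psdCone_prod 𝕜 ι κ)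
    (LinearMap.mulLeft ℝ (K * Kᴴ) ∘ₗ LinearMap.fst ℝ (Matrix ι ι 𝕜) (Matrix κ κ 𝕜))).congr
      fun Z hZ => ?_
  have hA : Z.1.IsHermitian := PosSemidef.isHermitian hZ.1
  rw [spectralForm_left hA (PosSemidef.isHermitian hZ.2), cfc_id' ℝ Z.1 (ha := hA.isSelfAdjoint),
    trace_mul_cycle]
  rfl

lemma concaveOn_spectralForm_snd (K : Matrix ι κ 𝕜) :
    ConcaveOn ℝ (psdCone 𝕜 ι ×ˢ psdCone 𝕜 κ) (spectralForm (fun _ x => x) K) := by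
  refine (concaveOn_re_trace_comp (convex_psdCone_prod 𝕜 ι κ)
    (LinearMap.mulLeft ℝ (Kᴴ * K) ∘ₗ LinearMap.snd ℝ (Matrix ι ι 𝕜) (Matrix κ κ 𝕜))).congr
      fun Z hZ => ?_
  have hX : Z.2.IsHermitian := PosSemidef.isHermitian hZ.2
  rw [spectralForm_right (PosSemidef.isHermitian hZ.1) hX, cfc_id' ℝ Z.2 (ha := hX.isSelfAdjoint)]
  rfl

lemma concaveOn_spectralForm_parallelSum {t : ℝ} (ht : 0 ≤ t) (K : Matrix ι κ 𝕜) :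
    ConcaveOn ℝ (psdCone 𝕜 ι ×ˢ psdCone 𝕜 κ)
      (spectralForm (fun a x => a * (t * x) / (a + t * x)) K) := by
  refine concaveOn_of_isLeast_range (convex_psdCone_prod 𝕜 ι κ) (fun W => ?_)
    fun Z hZ => isLeast_range_spectralForm_add_spectralForm_sub hZ.1 hZ.2 (fun a x ha _ => ha)
      (fun a x _ hx => mul_nonneg ht hx) K
  simp only [spectralForm_const_mul]
  exact (concaveOn_spectralForm_fst W).add ((concaveOn_spectralForm_snd (K - W)).smul ht)

lemma concaveOn_spectralForm_rpow_mul_rpow {p : ℝ} (hp : p ∈ Set.Icc 0 1) (K : Matrix ι κ 𝕜) :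
    ConcaveOn ℝ (psdCone 𝕜 ι ×ˢ psdCone 𝕜 κ)
      (spectralForm (fun a x => a ^ p * x ^ (1 - p)) K) := by
  rcases hp.1.eq_or_lt with rfl | hp0
  · simpa using concaveOn_spectralForm_snd K
  rcases hp.2.eq_or_lt with rfl | hp1
  · simpa using concaveOn_spectralForm_fst K
  obtain ⟨μ, hμ⟩ := exists_measure_rpow_mul_rpow_eq_integral ⟨hp0, hp1⟩
  have hint (a x : ℝ) (ha : 0 ≤ a) (hx : 0 ≤ x) := (hμ a x ha hx).1
  have concaveOn_integral : ConcaveOn ℝ (psdCone 𝕜 ι ×ˢ psdCone 𝕜 κ) fun Z => ∫ t in Set.Ioi 0,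
      spectralForm (fun a x => t ^ (p - 2) * (a * (t * x) / (a + t * x))) K Z ∂μ := by
    refine MeasureTheory.integral_concaveOn_of_integrand_ae (convex_psdCone_prod 𝕜 ι κ) ?_
      fun Z hZ => integrable_spectralForm hZ.1 hZ.2 hint
    filter_upwards [MeasureTheory.ae_restrict_mem measurableSet_Ioi] with t ht
    have ht : 0 ≤ t := (Set.mem_Ioi.1 ht).le
    exact ((concaveOn_spectralForm_parallelSum ht K).smul (Real.rpow_nonneg ht _)).congr fun Z _ =>
      (spectralForm_const_mul _ _ K Z).symm
  exact concaveOn_integral.congr fun Z hZ => (spectralForm_integral hZ.1 hZ.2 hint).symm.trans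
    (spectralForm_congr hZ.1 hZ.2 fun a x ha hx => (hμ a x ha hx).2.symm)

theorem lieb_concavity {p : ℝ} (hp : p ∈ Set.Icc 0 1) (K : Matrix ι κ 𝕜) :
    ConcaveOn ℝ (psdCone 𝕜 ι ×ˢ psdCone 𝕜 κ) fun Z =>
      RCLike.re (Kᴴ * cfc (fun a : ℝ => a ^ p) Z.1 * K *
        cfc (fun x : ℝ => x ^ (1 - p)) Z.2).trace :=
  (concaveOn_spectralForm_rpow_mul_rpow hp K).congr fun _ hZ =>
    spectralForm_mul hZ.1.isHermitian hZ.2.isHermitian _ _ K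

end Lieb

section Epstein

variable {𝕜 ι κ : Type*} [RCLike 𝕜] [Fintype ι] [DecidableEq ι] [Fintype κ] [DecidableEq κ]

lemma re_trace_mul_cfc_rpow_le {p : ℝ} (hp0 : 0 < p) (hp1 : p ≤ 1) {Y X : Matrix ι ι 𝕜}
    (hY : Y.PosSemidef) (hX : X.PosSemidef) :
    RCLike.re (Y * cfc (fun x : ℝ => x ^ (1 - p)) X).trace ≤
      p * RCLike.re (cfc (fun y : ℝ => y ^ (1 / p)) Y).trace + (1 - p) * RCLike.re X.trace := by
  have young (y x : ℝ) (hy : 0 ≤ y) (hx : 0 ≤ x) :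
      y * x ^ (1 - p) ≤ p * y ^ (1 / p) + (1 - p) * x := by
    have h := Real.geom_mean_le_arith_mean2_weighted hp0.le (sub_nonneg.2 hp1)
      (Real.rpow_nonneg hy (1 / p)) hx (add_sub_cancel _ _)
    rwa [← Real.rpow_mul hy, one_div_mul_cancel hp0.ne', Real.rpow_one] at h
  have h := spectralForm_mono (K := 1) hY hX young
  rw [spectralForm_add, spectralForm_const_mul, spectralForm_const_mul,
    spectralForm_mul hY.isHermitian hX.isHermitian (fun y => y),
    spectralForm_left hY.isHermitian hX.isHermitian,
    spectralForm_right hY.isHermitian hX.isHermitian,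
    cfc_id' ℝ Y (ha := hY.isHermitian.isSelfAdjoint),
    cfc_id' ℝ X (ha := hX.isHermitian.isSelfAdjoint)] at h
  simpa only [conjTranspose_one, Matrix.one_mul, Matrix.mul_one] using h

lemma isGreatest_re_trace_mul_cfc_rpow_sub {p : ℝ} (hp0 : 0 < p) (hp1 : p ≤ 1)
    {Y : Matrix ι ι 𝕜} (hY : Y.PosSemidef) :
    IsGreatest ((fun X => RCLike.re (Y * cfc (fun x : ℝ => x ^ (1 - p)) X).trace -
        (1 - p) * RCLike.re X.trace) '' psdCone 𝕜 ι)
      (p * RCLike.re (cfc (fun y : ℝ => y ^ (1 / p)) Y).trace) := by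
  refine ⟨⟨cfc (fun y : ℝ => y ^ (1 / p)) Y,
    posSemidef_cfc hY fun y hy => Real.rpow_nonneg hy _, ?_⟩, ?_⟩
  · simp only [mul_cfc_rpow_cfc_rpow hp0 hY]
    ring
  · rintro _ ⟨X, hX, rfl⟩
    exact sub_le_iff_le_add.2 (re_trace_mul_cfc_rpow_le hp0 hp1 hY hX)

lemma concaveOn_re_trace_mul_cfc_rpow_sub {p : ℝ} (hp : p ∈ Set.Icc 0 1) (K : Matrix ι κ 𝕜) :
    ConcaveOn ℝ (psdCone 𝕜 ι ×ˢ psdCone 𝕜 κ) fun Z =>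
      RCLike.re (Kᴴ * cfc (fun a : ℝ => a ^ p) Z.1 * K *
        cfc (fun x : ℝ => x ^ (1 - p)) Z.2).trace - (1 - p) * RCLike.re Z.2.trace := by
  have concaveOn_trace : ConcaveOn ℝ (psdCone 𝕜 ι ×ˢ psdCone 𝕜 κ) fun Z =>
      RCLike.re (-(1 - p) • Z.2).trace :=
    concaveOn_re_trace_comp (convex_psdCone_prod 𝕜 ι κ)
      (-(1 - p) • LinearMap.snd ℝ (Matrix ι ι 𝕜) (Matrix κ κ 𝕜))
  refine ((lieb_concavity hp K).add concaveOn_trace).congr fun Z _ => ?_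
  simp only [Pi.add_apply, trace_smul, RCLike.smul_re, neg_mul, sub_eq_add_neg]

theorem stmt5_general {p : ℝ} (hp0 : 0 < p) (hp1 : p ≤ 1) (B : Matrix ι κ 𝕜) :
    ConcaveOn ℝ (psdCone 𝕜 ι) fun A =>
      RCLike.re (cfc (fun y : ℝ => y ^ (1 / p)) (Bᴴ * cfc (fun a : ℝ => a ^ p) A * B)).trace := by
  have posSemidef_conj (A : Matrix ι ι 𝕜) (hA : A ∈ psdCone 𝕜 ι) :
      (Bᴴ * cfc (fun a : ℝ => a ^ p) A * B).PosSemidef :=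
    (posSemidef_cfc hA fun a ha => Real.rpow_nonneg ha p).conjTranspose_mul_mul_same B
  have concaveOn_mul : ConcaveOn ℝ (psdCone 𝕜 ι) fun A => p * RCLike.re
      (cfc (fun y : ℝ => y ^ (1 / p)) (Bᴴ * cfc (fun a : ℝ => a ^ p) A * B)).trace :=
    concaveOn_of_isGreatest_image (convex_psdCone 𝕜 ι)
      (hg := fun A hA => isGreatest_re_trace_mul_cfc_rpow_sub hp0 hp1 (posSemidef_conj A hA))
      (hf := concaveOn_re_trace_mul_cfc_rpow_sub ⟨hp0.le, hp1⟩ B)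
  refine (concaveOn_mul.smul (inv_nonneg.2 hp0.le)).congr fun A _ => ?_
  exact inv_mul_cancel_left₀ hp0.ne' _

end Epstein

theorem stmt5 {n : ℕ} (B : Matrix (Fin n) (Fin n) ℂ) (p : ℝ) (hp0 : 0 < p) (hp1 : p ≤ 1)
    (A₁ A₂ : Matrix (Fin n) (Fin n) ℂ) (hA₁ : A₁.PosSemidef) (hA₂ : A₂.PosSemidef)
    (c : ℝ) (hc0 : 0 ≤ c) (hc1 : c ≤ 1) :
    c * (mpow (Bᴴ * mpow A₁ p * B) (1 / p)).trace.re +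
        (1 - c) * (mpow (Bᴴ * mpow A₂ p * B) (1 / p)).trace.re ≤
      (mpow (Bᴴ * mpow ((c : ℂ) • A₁ + ((1 : ℂ) - (c : ℂ)) • A₂) p * B) (1 / p)).trace.re := by
  simp only [mpow_eq_cfc, ← Complex.ofReal_one, ← Complex.ofReal_sub, Complex.coe_smul]
  exact (stmt5_general hp0 hp1 B).2 hA₁ hA₂ hc0 (sub_nonneg.2 hc1) (add_sub_cancel c 1)
end
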